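/- Let p be a prime and let H be a nonabelian finite group acting faithfully on a faithful irreducible module V over a field of characteristic p, and let k be a subfield of the complex numbers containing the primitive pth roots of unity. If G = V ⋊ H, then acd_{k,p'}(G) ≥ 2. -/

import Mathlib

open scoped BigOperators

/-- The set of irreducible complex characters of `G`, viewed as functions `G → ℂ`. -/
def Irr (G : Type) [Monoid G] : Set (G → ℂ) :=
  {f | ∃ V : FDRep ℂ G, CategoryTheory.Simple V ∧ f = V.character}

/-- The degree of a character, i.e. its value at the identity (a natural number). -/
noncomputable def charDeg {G : Type} [One G] (f : G → ℂ) : ℕ := ⌊(f 1).re⌋₊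

/-- The average of the degrees of the characters in a set `S` of characters. -/
noncomputable def acd {G : Type} [One G] (S : Set (G → ℂ)) : ℝ :=
  (∑ᶠ f ∈ S, (f 1).re) / (S.ncard : ℝ)

/-- `G` has a normal `p`-complement: a normal subgroup of order coprime to `p`
whose index is a power of `p`. -/
def HasNormalPComplement (p : ℕ) (G : Type) [Group G] : Prop :=
  ∃ N : Subgroup G, N.Normal ∧ Nat.Coprime (Nat.card N) p ∧ ∃ n : ℕ, N.index = p ^ n

set_option linter.unusedSectionVars false
set_option linter.style.haveILetI false
section Mono

variable {H V : Type} [Group H] [Fintype H] [CommGroup V] [Fintype V]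
  (φ : H →* MulAut V) (lam : V →* ℂ) (T : Subgroup H)
  (hT : ∀ h, h ∈ T ↔ ∀ v, lam (φ h v) = lam v) (b : T →* ℂ)

/-- The conjugate of the character `lam` attached to a coset. -/
noncomputable def conjChar (x : H ⧸ T) : V →* ℂ :=
  lam.comp (φ (x.out)⁻¹).toMonoidHom

lemma conjChar_apply (x : H ⧸ T) (v : V) : conjChar φ lam T x v = lam (φ (x.out)⁻¹ v) := rfl

include hT in
lemma conjChar_injective : Function.Injective (conjChar φ lam T) := by
  intro x y hxy
  rw [← QuotientGroup.out_eq' x, ← QuotientGroup.out_eq' y, QuotientGroup.eq, hT]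
  intro v
  have h := DFunLike.congr_fun hxy (φ y.out v)
  rw [conjChar_apply, conjChar_apply, ← MulAut.mul_apply, ← MulAut.mul_apply, ← map_mul,
    ← map_mul, inv_mul_cancel, map_one, MulAut.one_apply] at h
  exact h

include hT in
lemma conjChar_orth (x y : H ⧸ T) [Decidable (x = y)] :
    ∑ v : V, conjChar φ lam T x v⁻¹ * conjChar φ lam T y v =
      if x = y then (Fintype.card V : ℂ) else 0 := by
  have key : ∀ v : V, ((conjChar φ lam T x).comp (invMonoidHom (α := V)) * conjChar φ lam T y) v
    = conjChar φ lam T x v⁻¹ * conjChar φ lam T y v := fun v => rfl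
  simp_rw [← key]
  split_ifs with h
  · subst h
    simp_rw [key, ← map_mul]
    simp
  · apply sum_hom_units_eq_zero
    intro h1
    apply h
    apply conjChar_injective φ lam T hT
    ext v
    have h2 := DFunLike.congr_fun h1 v
    rw [key] at h2
    simp only [MonoidHom.one_apply] at h2
    calc _ = conjChar φ lam T x v * (conjChar φ lam T x v⁻¹ * conjChar φ lam T y v) := by
            rw [h2, mul_one]
      _ = _ := by rw [← mul_assoc, ← map_mul]; simp

lemma cocycle_mem (g : H) (x : H ⧸ T) : (x.out)⁻¹ * g * (g⁻¹ • x).out ∈ T := by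
  have : (((x.out)⁻¹ * g)⁻¹ : H) = g⁻¹ * x.out := by group
  rw [← inv_inv ((x.out)⁻¹ * g), ← QuotientGroup.eq, this]
  rw [QuotientGroup.out_eq', ← smul_eq_mul, ← MulAction.Quotient.smul_coe, QuotientGroup.out_eq']

/-- The cocycle attached to the action on cosets. -/
noncomputable def cocyc (g : H) (x : H ⧸ T) : T := ⟨_, cocycle_mem T g x⟩

lemma cocyc_one (x : H ⧸ T) : cocyc T 1 x = 1 := by
  apply Subtype.ext; simp [cocyc]

lemma cocyc_mul (g h : H) (x : H ⧸ T) :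
    cocyc T (g * h) x = cocyc T g x * cocyc T h (g⁻¹ • x) := by
  apply Subtype.ext; simp [cocyc, mul_smul, mul_assoc]

include hT in
lemma conjChar_smul (g : H) (x : H ⧸ T) (v : V) :
    conjChar φ lam T x (φ g v) = conjChar φ lam T (g⁻¹ • x) v := by
  have h := (hT _).1 (cocycle_mem T g x) (φ ((g⁻¹ • x).out)⁻¹ v)
  rw [conjChar_apply, conjChar_apply, ← h, ← MulAut.mul_apply, ← MulAut.mul_apply, ← map_mul,
    ← map_mul]
  simp

/-- The monomial representation induced from `lam * b`. -/
noncomputable def monoRep : Representation ℂ (V ⋊[φ] H) (H ⧸ T → ℂ) where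
  toFun g :=
    { toFun := fun F x => conjChar φ lam T x g.left * b (cocyc T g.right x) * F (g.right⁻¹ • x)
      map_add' := by intros; ext; simp [mul_add]
      map_smul' := by intros; ext; simp; ring }
  map_one' := by
    ext F x
    simp [cocyc_one]
  map_mul' g h := by
    apply LinearMap.ext
    intro F
    funext x
    simp only [LinearMap.coe_mk, AddHom.coe_mk, Module.End.mul_apply, SemidirectProduct.mul_left,
      SemidirectProduct.mul_right, map_mul, cocyc_mul, conjChar_smul φ lam T hT, mul_inv_rev,
      mul_smul]
    ring

lemma monoRep_apply (g : V ⋊[φ] H) (F : H ⧸ T → ℂ) (x : H ⧸ T) :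
    monoRep φ lam T hT b g F x =
      conjChar φ lam T x g.left * b (cocyc T g.right x) * F (g.right⁻¹ • x) := rfl

open Classical in
lemma monoRep_char (g : V ⋊[φ] H) :
    (monoRep φ lam T hT b).character g = ∑ x : H ⧸ T,
      conjChar φ lam T x g.left * (b (cocyc T g.right x) * if g.right⁻¹ • x = x then 1 else 0) := by
  rw [Representation.character, LinearMap.trace_eq_matrix_trace ℂ (Pi.basisFun ℂ (H ⧸ T)),
    Matrix.trace]
  refine Finset.sum_congr rfl fun x _ => ?_
  rw [Matrix.diag_apply, LinearMap.toMatrix_apply]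
  simp [monoRep_apply, Pi.single_apply, mul_assoc]

open Classical in
lemma monoRep_proj (F : H ⧸ T → ℂ) (x : H ⧸ T) :
    ∑ v : V, conjChar φ lam T x v⁻¹ • monoRep φ lam T hT b (SemidirectProduct.inl v) F
      = Pi.single x ((Fintype.card V : ℂ) * F x) := by
  funext y
  rw [Finset.sum_apply]
  simp only [Pi.smul_apply, monoRep_apply, smul_eq_mul, SemidirectProduct.left_inl,
    SemidirectProduct.right_inl, cocyc_one, map_one, inv_one, one_smul, mul_one, ← mul_assoc]
  rw [← Finset.sum_mul, conjChar_orth φ lam T hT]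
  by_cases h : x = y
  · subst h; simp
  · simp [h, Pi.single_apply, Ne.symm h]

lemma b_ne_zero (t : T) : b t ≠ 0 := by
  intro h
  have := map_mul b t t⁻¹
  simp [h] at this

lemma monoRep_irr : (monoRep φ lam T hT b).IsIrreducible := by
  classical
  have hV : (Fintype.card V : ℂ) ≠ 0 := by exact_mod_cast Fintype.card_ne_zero
  refine { toNontrivial := ⟨⊥, ⊤, ?_⟩, eq_bot_or_eq_top := ?_ }
  · intro h
    have h1 := congrArg Subrepresentation.toSubmodule h
    have h2 : (⊥ : Submodule ℂ (H ⧸ T → ℂ)) = ⊤ := h1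
    exact bot_ne_top h2
  · intro W
    by_cases hW : ∃ F ∈ W.toSubmodule, F ≠ 0
    · right
      obtain ⟨F, hF, hF0⟩ := hW
      obtain ⟨x, hx⟩ := Function.ne_iff.1 hF0
      have h1 : Pi.single x ((Fintype.card V : ℂ) * F x) ∈ W.toSubmodule := by
        rw [← monoRep_proj φ lam T hT b]
        exact Submodule.sum_mem _ fun v _ =>
          Submodule.smul_mem _ _ (W.apply_mem_toSubmodule _ hF)
      have h2 : ∀ y : H ⧸ T, Pi.single y (1 : ℂ) ∈ W.toSubmodule := by
        intro y
        obtain ⟨g, hg⟩ := MulAction.exists_smul_eq H x y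
        have h3 := W.apply_mem_toSubmodule (SemidirectProduct.inr g) h1
        have h4 : monoRep φ lam T hT b (SemidirectProduct.inr g)
            (Pi.single x ((Fintype.card V : ℂ) * F x)) =
            (b (cocyc T g y) * ((Fintype.card V : ℂ) * F x)) • Pi.single y (1 : ℂ) := by
          funext z
          rw [monoRep_apply]
          by_cases hz : z = y
          · subst hz; subst hg; simp
          · have : g⁻¹ • z ≠ x := by
              intro h; apply hz; rw [← hg, ← h]; simp
            simp [this, hz]
        rw [h4] at h3
        exact (Submodule.smul_mem_iff _ (mul_ne_zero (b_ne_zero T b _) (mul_ne_zero hV hx))).1 h3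
      apply Subrepresentation.toSubmodule_injective
      change W.toSubmodule = ⊤
      rw [eq_top_iff, ← (Pi.basisFun ℂ (H ⧸ T)).span_eq, Submodule.span_le]
      rintro _ ⟨y, rfl⟩
      simpa using h2 y
    · left
      push Not at hW
      apply Subrepresentation.toSubmodule_injective
      change W.toSubmodule = ⊥
      exact (Submodule.eq_bot_iff _).2 hW

lemma monoRep_simple : CategoryTheory.Simple (FDRep.of (monoRep φ lam T hT b)) := by
  classical
  haveI := monoRep_irr φ lam T hT b
  haveI : Finite (V ⋊[φ] H) := Finite.of_equiv _ SemidirectProduct.equivProd.symm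
  haveI : Fintype (V ⋊[φ] H) := Fintype.ofFinite _
  haveI := invertibleOfNonzero (NeZero.ne (Nat.card (V ⋊[φ] H) : ℂ))
  rw [FDRep.simple_iff_char_is_norm_one]
  have h := Representation.char_orthonormal (monoRep φ lam T hT b) (monoRep φ lam T hT b)
  rw [if_pos ⟨Representation.Equiv.refl _⟩] at h
  rw [inv_mul_eq_one₀ (NeZero.ne _)] at h
  exact h.symm

lemma monoRep_char_one : (monoRep φ lam T hT b).character 1 = T.index := by
  rw [Representation.char_one]
  classical
  haveI : Fintype (H ⧸ T) := Fintype.ofFinite _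
  rw [Module.finrank_fintype_fun_eq_card, Subgroup.index, Nat.card_eq_fintype_card]

lemma monoRep_char_inj (b' : T →* ℂ)
    (h : (monoRep φ lam T hT b).character = (monoRep φ lam T hT b').character) : b = b' := by
  classical
  have hV : (Fintype.card V : ℂ) ≠ 0 := by exact_mod_cast Fintype.card_ne_zero
  have key : ∀ (c : T →* ℂ) (t : T), ∑ v : V, conjChar φ lam T ((1 : H) : H ⧸ T) v⁻¹ *
      (monoRep φ lam T hT c).character ⟨v, t⟩ = (Fintype.card V : ℂ) * c t := by
    intro c t
    simp_rw [monoRep_char, Finset.mul_sum]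
    rw [Finset.sum_comm]
    have h0 : ∀ x : H ⧸ T, ∑ v : V, conjChar φ lam T ((1 : H) : H ⧸ T) v⁻¹ *
        (conjChar φ lam T x v * (c (cocyc T (t : H) x) * if (t : H)⁻¹ • x = x then 1 else 0)) =
        (if ((1 : H) : H ⧸ T) = x then (Fintype.card V : ℂ) else 0) *
        (c (cocyc T (t : H) x) * if (t : H)⁻¹ • x = x then 1 else 0) := by
      intro x
      rw [← conjChar_orth φ lam T hT, Finset.sum_mul]
      simp_rw [mul_assoc]
    rw [Finset.sum_congr rfl fun x _ => h0 x]
    simp only [ite_mul, zero_mul, Finset.sum_ite_eq, Finset.mem_univ, if_true]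
    have h1 : ((t : H)⁻¹ • ((1 : H) : H ⧸ T)) = ((1 : H) : H ⧸ T) := by
      rw [MulAction.Quotient.smul_coe, QuotientGroup.eq]; simp
    rw [if_pos h1, mul_one]
    congr 1
    have h2 : (((1 : H) : H ⧸ T)).out ∈ T := by
      have := QuotientGroup.out_eq' (((1 : H) : H ⧸ T))
      rw [eq_comm, QuotientGroup.eq] at this
      simpa using this
    have h3 : cocyc T (t : H) ((1 : H) : H ⧸ T) = (⟨_, h2⟩ : T)⁻¹ * t * ⟨_, h2⟩ := by
      apply Subtype.ext
      simp only [cocyc, h1]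
      rfl
    rw [h3, map_mul, map_mul, mul_comm, ← mul_assoc, ← map_mul]
    simp
  ext t
  have h1 := key b t
  rw [h, key b' t] at h1
  exact (mul_left_cancel₀ hV h1).symm

end Mono

section Count
open scoped commutatorElement


lemma unitHoms_finite_card (Q K : Type) [Group Q] [Finite Q] [Field K] :
    Finite (Q →* Kˣ) ∧ Nat.card (Q →* Kˣ) ≤ Nat.card Q := by
  classical
  haveI : Fintype Q := Fintype.ofFinite _
  have h := linearIndependent_monoidHom Q K
  have h2 : Function.Injective (fun f : Q →* Kˣ => (Units.coeHom K).comp f) := by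
    intro f g hfg
    ext x
    exact DFunLike.congr_fun hfg x
  have h3 := h.comp _ h2
  have hfin : Finite (Q →* Kˣ) := h3.finite
  haveI : Fintype (Q →* Kˣ) := Fintype.ofFinite _
  refine ⟨hfin, ?_⟩
  have := h3.fintype_card_le_finrank
  rwa [Module.finrank_fintype_fun_eq_card, ← Nat.card_eq_fintype_card,
    ← Nat.card_eq_fintype_card] at this

lemma count_linear (H K : Type) [Group H] [Finite H] [Field K] (T : Subgroup H)
    (hT : ¬ commutator H ≤ T) :
    3 ≤ T.index ∧ Nat.card (H →* Kˣ) ≤ Nat.card (T →* Kˣ) * (T.index - 2) := by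
  have hfH := (unitHoms_finite_card H K).1
  have hfT := (unitHoms_finite_card T K).1
  set N : Subgroup H := T ⊔ commutator H with hN
  have hTN : T ≤ N := le_sup_left
  have hCN : commutator H ≤ N := le_sup_right
  haveI hnorm : N.Normal := by
    constructor
    intro n hn g
    have h1 : ⁅g, n⁆ ∈ N := hCN (Subgroup.commutator_mem_commutator (Subgroup.mem_top _) (Subgroup.mem_top _))
    have := N.mul_mem h1 hn
    simpa [commutatorElement_def] using this
  have hmul := Subgroup.relIndex_mul_index hTN
  have ha : T.relIndex N ≠ 1 := by
    rw [Ne, Subgroup.relIndex_eq_one]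
    exact fun h => hT (hCN.trans h)
  have hi0 : T.index ≠ 0 := Subgroup.index_ne_zero_of_finite
  have hi2 : T.index ≠ 2 := by
    intro h
    apply hT
    rw [commutator_def, Subgroup.commutator_le]
    intro x _ y _
    rw [commutatorElement_def]
    simp only [Subgroup.mul_mem_iff_of_index_two h, inv_mem_iff]
    tauto
  have hineq : 3 ≤ T.index ∧ N.index ≤ T.index - 2 := by
    generalize T.relIndex N = a at *
    generalize N.index = c at *
    generalize T.index = m at *
    have ha0 : a ≠ 0 := by rintro rfl; simp at hmul; exact hi0 hmul.symm
    have hc0 : c ≠ 0 := by rintro rfl; simp at hmul; exact hi0 hmul.symm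
    have ha2 : 2 ≤ a := by omega
    by_cases hc : c = 1
    · subst hc; omega
    · have : 2 * c ≤ m := by rw [← hmul]; exact Nat.mul_le_mul_right _ ha2
      omega
  refine ⟨hineq.1, ?_⟩
  let r : (H →* Kˣ) →* (T →* Kˣ) := MonoidHom.domRestrictHom T Kˣ
  have hker : Nat.card r.ker ≤ N.index := by
    have hle : ∀ f : r.ker, N ≤ f.1.ker := by
      intro f
      refine sup_le ?_ (Abelianization.commutator_subset_ker _)
      intro t ht
      have := DFunLike.congr_fun (MonoidHom.mem_ker.1 f.2) (⟨t, ht⟩ : T)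
      simpa [r] using this
    let j : r.ker → (H ⧸ N →* Kˣ) := fun f => QuotientGroup.lift N f.1 (hle f)
    have hj : Function.Injective j := by
      intro f g hfg
      apply Subtype.ext
      apply MonoidHom.ext
      intro x
      exact DFunLike.congr_fun hfg (x : H ⧸ N)
    have hq := unitHoms_finite_card (H ⧸ N) K
    haveI := hq.1
    exact (Nat.card_le_card_of_injective j hj).trans hq.2
  have hrange : Nat.card r.range ≤ Nat.card (T →* Kˣ) := Subgroup.card_le_card_group _
  rw [← Subgroup.card_mul_index r.ker, Subgroup.index_ker, mul_comm]
  exact Nat.mul_le_mul hrange (hker.trans hineq.2)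

lemma exists_good_char (p : ℕ) (hp : p.Prime)
    (H V : Type) [Group H] [Fintype H] (hnab : ∃ x y : H, x * y ≠ y * x)
    [CommGroup V] [Fintype V] [Nontrivial V]
    (helem : ∀ v : V, v ^ p = 1)
    (φ : H →* MulAut V) (hfaith : Function.Injective φ)
    (hirr : ∀ W : Subgroup V, (∀ h : H, ∀ w ∈ W, φ h w ∈ W) → W = ⊥ ∨ W = ⊤)
    (k : Subfield ℂ) (hk : ∀ ζ : ℂ, IsPrimitiveRoot ζ p → ζ ∈ k) :
    ∃ (lam : V →* kˣ) (T : Subgroup H), (∀ h, h ∈ T ↔ ∀ v, lam (φ h v) = lam v) ∧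
      ¬ p ∣ T.index ∧ ¬ commutator H ≤ T := by
  haveI : Fact p.Prime := ⟨hp⟩
  haveI : NeZero p := ⟨hp.ne_zero⟩
  have hz := Complex.isPrimitiveRoot_exp p hp.ne_zero
  haveI : HasEnoughRootsOfUnity k p :=
    { prim := ⟨⟨_, hk _ hz⟩, IsPrimitiveRoot.of_map_of_injective (f := k.subtype) hz
        k.subtype.injective⟩
      cyc := inferInstance }
  have hexp : Monoid.exponent V ∣ p := Monoid.exponent_dvd_of_forall_pow_eq_one helem
  haveI : HasEnoughRootsOfUnity k (Monoid.exponent V) := HasEnoughRootsOfUnity.of_dvd k hexp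
  haveI : Finite (V →* kˣ) := (unitHoms_finite_card V k).1
  have hcard : p ∣ Nat.card (V →* kˣ) := by
    rw [CommGroup.card_monoidHom_of_hasEnoughRootsOfUnity]
    obtain ⟨v, hv⟩ := exists_ne (1 : V)
    rw [← orderOf_eq_prime (helem v) hv]
    exact orderOf_dvd_natCard v
  let P : Sylow p H := default
  letI act : MulAction P (V →* kˣ) :=
    { smul := fun h l => l.comp (φ (h : H)⁻¹).toMonoidHom
      one_smul := by
        intro l; ext v
        change ((l (φ ((1 : P) : H)⁻¹ v) : kˣ) : ℂ) = _
        simp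
      mul_smul := by
        intro g h l; ext v
        change ((l (φ ((g * h : P) : H)⁻¹ v) : kˣ) : ℂ) =
          ((l (φ (h : H)⁻¹ (φ (g : H)⁻¹ v)) : kˣ) : ℂ)
        simp }
  have hact : ∀ (h : P) (l : V →* kˣ) (v : V), (h • l) v = l (φ (h : H)⁻¹ v) := fun _ _ _ => rfl
  have hone : (1 : V →* kˣ) ∈ MulAction.fixedPoints P (V →* kˣ) := by
    intro h
    ext v
    rw [hact]; simp
  obtain ⟨lam, hlam, hne⟩ :=
    P.2.exists_fixed_point_of_prime_dvd_card_of_fixed_point _ hcard hone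
  let T : Subgroup H :=
    { carrier := {h | ∀ v, lam (φ h v) = lam v}
      mul_mem' := by
        intro a b ha hb v
        rw [map_mul, MulAut.mul_apply, ha, hb]
      one_mem' := by intro v; simp
      inv_mem' := by
        intro a ha v
        rw [← ha, ← MulAut.mul_apply, ← map_mul]; simp }
  have hT : ∀ h, h ∈ T ↔ ∀ v, lam (φ h v) = lam v := fun h => Iff.rfl
  refine ⟨lam, T, hT, ?_, ?_⟩
  · intro h
    have hPT : (P : Subgroup H) ≤ T := by
      intro h hh v
      have := DFunLike.congr_fun (hlam (⟨h, hh⟩⁻¹ : P)) v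
      rw [hact] at this
      simpa using this
    exact P.not_dvd_index (h.trans (Subgroup.index_dvd_of_le hPT))
  · intro hC
    let W : Subgroup V :=
      { carrier := {v | ∀ h : H, lam (φ h v) = 1}
        mul_mem' := by
          intro a b ha hb h
          rw [map_mul, map_mul, ha, hb, mul_one]
        one_mem' := by intro h; simp
        inv_mem' := by
          intro a ha h
          rw [map_inv, map_inv, ha, inv_one] }
    have hW : ∀ v, v ∈ W ↔ ∀ h : H, lam (φ h v) = 1 := fun _ => Iff.rfl
    rcases hirr W (by
      intro h w hw
      rw [hW] at hw ⊢
      intro g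
      rw [← MulAut.mul_apply, ← map_mul]
      exact hw _) with hbot | htop
    · obtain ⟨x, y, hxy⟩ := hnab
      have hc : ⁅x, y⁆ ∈ commutator H := Subgroup.commutator_mem_commutator (Subgroup.mem_top _) (Subgroup.mem_top _)
      have h1 : φ ⁅x, y⁆ = 1 := by
        ext v
        have h2 : φ ⁅x, y⁆ v * v⁻¹ ∈ W := by
          rw [hW]
          intro h
          have h3 := (hT _).1 (hC ((inferInstance : (commutator H).Normal).conj_mem _ hc h)) (φ h v)
          rw [← MulAut.mul_apply, ← map_mul, inv_mul_cancel_right, map_mul, MulAut.mul_apply] at h3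
          rw [map_mul, map_mul, h3, ← map_mul, ← map_mul]
          simp
        rw [hbot, Subgroup.mem_bot, mul_inv_eq_one] at h2
        simpa using h2
      have h4 : ⁅x, y⁆ = 1 := hfaith (h1.trans (map_one φ).symm)
      exact hxy (commutatorElement_eq_one_iff_mul_comm.1 h4)
    · apply hne
      apply MonoidHom.ext
      intro v
      have : v ∈ W := by rw [htop]; trivial
      have := (hW v).1 this 1
      simpa using this.symm

end Count

lemma Irr_finite (G : Type) [Group G] [Finite G] : (Irr G).Finite := by
  classical
  haveI : Fintype G := Fintype.ofFinite _
  haveI := invertibleOfNonzero (NeZero.ne (Nat.card G : ℂ))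
  have hcard : (Nat.card G : ℂ) ≠ 0 := NeZero.ne _
  have horth : ∀ f g : Irr G, ∑ x : G, f.1 x * g.1 x⁻¹ = if f = g then (Nat.card G : ℂ) else 0 := by
    rintro ⟨f, V, hV, rfl⟩ ⟨g, W, hW, rfl⟩
    split_ifs with h
    · have h' : V.character = W.character := congrArg Subtype.val h
      have := FDRep.char_orthonormal W W
      rw [if_pos ⟨CategoryTheory.Iso.refl _⟩, inv_mul_eq_one₀ hcard] at this
      simp only [h']
      exact this.symm
    · have := FDRep.char_orthonormal V W
      rw [if_neg, mul_eq_zero] at this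
      · rcases this with h1 | h1
        · exact absurd h1 (inv_ne_zero hcard)
        · exact h1
      · rintro ⟨i⟩
        exact h (Subtype.ext (FDRep.char_iso i))
  have hli : LinearIndependent ℂ (fun f : Irr G => f.1) := by
    rw [linearIndependent_iff']
    intro s c hs i hi
    have h1 : ∑ x : G, (∑ f ∈ s, c f • f.1) x * i.1 x⁻¹ = 0 := by
      rw [hs]; simp
    simp_rw [Finset.sum_apply, Pi.smul_apply, smul_eq_mul, Finset.sum_mul] at h1
    rw [Finset.sum_comm] at h1
    simp_rw [mul_assoc, ← Finset.mul_sum, horth] at h1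
    simp [hi] at h1
    exact h1
  exact Set.finite_coe_iff.1 hli.finite

lemma char_mul_of_finrank_one {G : Type} [Group G] (W : FDRep ℂ G)
    (h : Module.finrank ℂ W = 1) (x y : G) :
    W.character (x * y) = W.character x * W.character y := by
  have key : ∀ f : W →ₗ[ℂ] W, ∃ c : ℂ, f = c • LinearMap.id := fun f =>
    (LinearMap.existsUnique_eq_smul_id_of_finrank_eq_one h f).exists
  obtain ⟨a, ha⟩ := key (W.ρ x)
  obtain ⟨b, hb⟩ := key (W.ρ y)
  have htr : ∀ c : ℂ, LinearMap.trace ℂ W (c • LinearMap.id) = c := by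
    intro c
    rw [map_smul, LinearMap.trace_id, h]; simp
  have hab : (a • (LinearMap.id : W →ₗ[ℂ] W)) * (b • LinearMap.id) = (a * b) • LinearMap.id := by
    ext w
    simp [Module.End.mul_apply, smul_smul, mul_comm]
  simp only [FDRep.character, map_mul]
  rw [ha, hb, hab, htr, htr, htr]

lemma linear_char_descends
    (H V : Type) [Group H] (hnab : ∃ x y : H, x * y ≠ y * x)
    [CommGroup V]
    (φ : H →* MulAut V) (hfaith : Function.Injective φ)
    (hirr : ∀ W : Subgroup V, (∀ h : H, ∀ w ∈ W, φ h w ∈ W) → W = ⊥ ∨ W = ⊤)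
    {A : Type} [CommGroup A] (a : V ⋊[φ] H →* A) (g : V ⋊[φ] H) :
    a g = a (SemidirectProduct.inr g.right) := by
  let W : Subgroup V := (a.comp SemidirectProduct.inl).ker
  have hW : ∀ v, v ∈ W ↔ a (SemidirectProduct.inl v) = 1 := fun v => Iff.rfl
  have hconj : ∀ h v, a (SemidirectProduct.inl (φ h v)) = a (SemidirectProduct.inl v) := by
    intro h v
    rw [SemidirectProduct.inl_aut, map_mul, map_mul, mul_comm, ← mul_assoc, ← map_mul, ← map_mul]
    simp
  rcases hirr W (fun h w hw => by rw [hW, hconj]; exact hw) with hbot | htop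
  · exfalso
    obtain ⟨x, y, hxy⟩ := hnab
    have : ∀ h : H, h = 1 := by
      intro h
      apply hfaith
      ext v
      have h2 : φ h v * v⁻¹ ∈ W := by
        rw [hW, map_mul, map_mul, hconj, ← map_mul, ← map_mul]; simp
      rw [hbot, Subgroup.mem_bot, mul_inv_eq_one] at h2
      simpa using h2
    exact hxy (by rw [this x, this y])
  · have h1 : g.left ∈ W := by rw [htop]; trivial
    conv_lhs => rw [← SemidirectProduct.inl_left_mul_inr_right g]
    rw [map_mul, (hW _).1 h1, one_mul]

lemma acd_ge_two_of_count {G : Type} [One G] (S L M : Set (G → ℂ)) (m : ℕ)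
    (hS : S.Finite) (hM : M ⊆ S) (hMne : M.Nonempty) (hm : 3 ≤ m)
    (hMdeg : ∀ f ∈ M, f 1 = m) (hLdeg : ∀ f ∈ L, f 1 = 1) (hLS : L ⊆ S)
    (hdeg : ∀ f ∈ S, f ∉ L → 2 ≤ (f 1).re)
    (hcount : L.ncard ≤ M.ncard * (m - 2)) : 2 ≤ acd S := by
  classical
  have hLf : L.Finite := hS.subset hLS
  have hMf : M.Finite := hS.subset hM
  have hpos : 0 < S.ncard := (Set.ncard_pos hS).2 (hMne.mono hM)
  rw [acd, le_div_iff₀ (by exact_mod_cast hpos), finsum_mem_eq_finite_toFinset_sum _ hS,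
    Set.ncard_eq_toFinset_card _ hS]
  rw [Set.ncard_eq_toFinset_card _ hLf, Set.ncard_eq_toFinset_card _ hMf] at hcount
  have h1 : ∑ f ∈ hS.toFinset, ((if f ∈ M then ((m : ℝ) - 2) else 0) - (if f ∈ L then 1 else 0)) ≤
      ∑ f ∈ hS.toFinset, ((f 1).re - 2) := by
    apply Finset.sum_le_sum
    intro f hf
    rw [Set.Finite.mem_toFinset] at hf
    have hm' : (3 : ℝ) ≤ m := by exact_mod_cast hm
    by_cases hfM : f ∈ M
    · have hfm := hMdeg f hfM
      have hfL : f ∉ L := by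
        intro hfL
        rw [hLdeg f hfL] at hfm
        have : (1 : ℕ) = m := by exact_mod_cast hfm
        omega
      simp [hfM, hfL, hfm]
    · by_cases hfL : f ∈ L
      · simp [hfM, hfL, hLdeg f hfL]; norm_num
      · simp [hfM, hfL]; exact hdeg f hf hfL
  have hLfil : (hS.toFinset.filter (· ∈ L)) = hLf.toFinset := by
    ext f; simp; exact fun h => hLS h
  have hMfil : (hS.toFinset.filter (· ∈ M)) = hMf.toFinset := by
    ext f; simp; exact fun h => hM h
  rw [Finset.sum_sub_distrib, Finset.sum_sub_distrib, ← Finset.sum_filter, ← Finset.sum_filter,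
    hLfil, hMfil] at h1
  simp only [Finset.sum_const, nsmul_eq_mul, mul_one] at h1
  have h2 : (hLf.toFinset.card : ℝ) ≤ hMf.toFinset.card * ((m : ℝ) - 2) := by
    have : ((m - 2 : ℕ) : ℝ) = (m : ℝ) - 2 := by
      rw [Nat.cast_sub (by omega)]; norm_num
    rw [← this]
    exact_mod_cast hcount
  linarith

theorem nonabelian_semidirect_acd_pprime_ge_two
    (p : ℕ) (hp : p.Prime)
    (H V : Type) [Group H] [Fintype H] (hnab : ∃ x y : H, x * y ≠ y * x)
    [CommGroup V] [Fintype V] [Nontrivial V]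
    (helem : ∀ v : V, v ^ p = 1)
    (φ : H →* MulAut V) (hfaith : Function.Injective φ)
    (hirr : ∀ W : Subgroup V, (∀ h : H, ∀ w ∈ W, φ h w ∈ W) → W = ⊥ ∨ W = ⊤)
    (k : Subfield ℂ) (hk : ∀ ζ : ℂ, IsPrimitiveRoot ζ p → ζ ∈ k) :
    2 ≤ acd {f ∈ Irr (V ⋊[φ] H) | (∀ g, f g ∈ k) ∧ ¬ p ∣ charDeg f} := by
  classical
  obtain ⟨lam, T, hT, hpT, hC⟩ := exists_good_char p hp H V hnab helem φ hfaith hirr k hk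
  obtain ⟨hm, hcount⟩ := count_linear H k T hC
  haveI : Finite (V ⋊[φ] H) := Finite.of_equiv _ SemidirectProduct.equivProd.symm
  haveI : Finite (H →* kˣ) := (unitHoms_finite_card H k).1
  haveI : Finite (T →* kˣ) := (unitHoms_finite_card T k).1
  set S := {f ∈ Irr (V ⋊[φ] H) | (∀ g, f g ∈ k) ∧ ¬ p ∣ charDeg f} with hSdef
  have hSfin : S.Finite := (Irr_finite _).subset fun f hf => hf.1
  let ι : kˣ →* ℂ := (k.subtype : k →* ℂ).comp (Units.coeHom k)
  have hιk : ∀ u, ι u ∈ k := fun u => (u : k).2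
  have hιinj : Function.Injective ι := by
    intro u v huv
    exact Units.ext (Subtype.ext huv)
  have hT' : ∀ h, h ∈ T ↔ ∀ v, (ι.comp lam) (φ h v) = (ι.comp lam) v := by
    intro h
    rw [hT]
    exact forall_congr' fun v => hιinj.eq_iff.symm
  let X : (T →* kˣ) → (V ⋊[φ] H → ℂ) := fun b =>
    (monoRep φ (ι.comp lam) T hT' (ι.comp b)).character
  have hXinj : Function.Injective X := by
    intro b b' h
    have := monoRep_char_inj φ (ι.comp lam) T hT' _ _ h
    apply MonoidHom.ext
    intro t
    exact hιinj (DFunLike.congr_fun this t)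
  have hX1 : ∀ b, X b 1 = T.index := fun b => monoRep_char_one φ (ι.comp lam) T hT' (ι.comp b)
  have hXk : ∀ b g, X b g ∈ k := by
    intro b g
    simp only [X, monoRep_char]
    refine k.sum_mem fun x _ => k.mul_mem (hιk _) (k.mul_mem (hιk _) ?_)
    split_ifs
    · exact k.one_mem
    · exact k.zero_mem
  refine acd_ge_two_of_count S {f ∈ S | f 1 = 1} (Set.range X) T.index hSfin ?_
    (Set.range_nonempty X) hm ?_ (fun f hf => hf.2) (fun f hf => hf.1) ?_ ?_
  · rintro _ ⟨b, rfl⟩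
    refine ⟨⟨_, monoRep_simple φ (ι.comp lam) T hT' (ι.comp b), rfl⟩, hXk b, ?_⟩
    simpa [charDeg, hX1] using hpT
  · rintro _ ⟨b, rfl⟩
    exact hX1 b
  · rintro f ⟨⟨W, hW, rfl⟩, hf⟩ hfL
    have h1 : W.character 1 = (Module.finrank ℂ W : ℂ) := W.char_one
    have hne1 : Module.finrank ℂ W ≠ 1 := by
      intro h
      apply hfL
      refine ⟨⟨⟨W, hW, rfl⟩, hf⟩, ?_⟩
      rw [h1, h]; simp
    have hne0 : Module.finrank ℂ W ≠ 0 := by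
      intro h
      apply hf.2
      simp [charDeg, h1, h]
    rw [h1]
    have : 2 ≤ Module.finrank ℂ W := by omega
    simpa using this
  · rw [Set.ncard_range_of_injective hXinj]
    refine le_trans ?_ hcount
    let J : (H →* kˣ) → (V ⋊[φ] H → ℂ) := fun a g => ι (a g.right)
    have hsub : {f ∈ S | f 1 = 1} ⊆ Set.range J := by
      rintro f ⟨⟨⟨W, hW, rfl⟩, hf⟩, hf1⟩
      have h1 : W.character 1 = (Module.finrank ℂ W : ℂ) := W.char_one
      have hfr : Module.finrank ℂ W = 1 := by
        rw [h1] at hf1; exact_mod_cast hf1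
      let a0 : V ⋊[φ] H →* k :=
        { toFun := fun g => ⟨W.character g, hf.1 g⟩
          map_one' := Subtype.ext hf1
          map_mul' := fun x y => Subtype.ext (char_mul_of_finrank_one W hfr x y) }
      let a : V ⋊[φ] H →* kˣ := a0.toHomUnits
      refine ⟨a.comp SemidirectProduct.inr, ?_⟩
      funext g
      have := linear_char_descends H V hnab φ hfaith hirr a g
      change ι (a (SemidirectProduct.inr g.right)) = _
      rw [← this]
      rfl
    refine (Set.ncard_le_ncard hsub (Set.finite_range J)).trans ?_
    rw [← Set.image_univ]
    exact (Set.ncard_image_le Set.finite_univ).trans_eq (Set.ncard_univ _)
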